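/- Let E = EuclideanSpace ℝ (Fin p) with p ≥ 1, let η > 0 and λ ≤ Λ be real numbers, and set α = max{|1-ηλ|, |1-ηΛ|} and γ = α^m for a fixed m ≥ 1. For each round t ∈ {1,…,T}, let K_t be a nonempty finite index set, let a_{t,k} ≥ 0 with Σ_{k∈K_t} a_{t,k} = 1, and for each k ∈ K_t and i ∈ {0,…,m-1} let H_{t,k,i} : E →L[ℝ] E be self-adjoint with λ‖v‖² ≤ ⟪H_{t,k,i} v, v⟫ ≤ Λ‖v‖² for all v ∈ E. Define M_t = Σ_{k∈K_t} a_{t,k} · ∏_{i=m-1}^{0} (I - η H_{t,k,i}) (operator composition). Let b_t ∈ E and let sequences ε*, ε : ℕ → E satisfy ε*_0 = ε_0 = 0, ε_t = M_t ε_{t-1} + b_t for t ≥ 1, and ‖ε*_t - M_t ε*_{t-1} - b_t‖ ≤ e for all t ≥ 1 with some e ≥ 0. Then for every t ≥ 0, ‖ε*_t - ε_t‖ ≤ e · Σ_{i=0}^{t-1} γ^i. -/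

import Mathlib

open scoped RealInnerProductSpace

theorem norm_factor_le {E : Type*} [NormedAddCommGroup E] [InnerProductSpace ℝ E]
    [CompleteSpace E] (η lam Lam : ℝ) (hη : 0 < η) (H : E →L[ℝ] E)
    (hself : ∀ u v : E, ⟪H v, u⟫ = ⟪v, H u⟫)
    (hb : ∀ v : E, lam * ‖v‖ ^ 2 ≤ ⟪H v, v⟫ ∧ ⟪H v, v⟫ ≤ Lam * ‖v‖ ^ 2) :
    ‖ContinuousLinearMap.id ℝ E - η • H‖ ≤ max |1 - η * lam| |1 - η * Lam| := by
  have hs : (ContinuousLinearMap.id ℝ E - η • H).IsSymmetric := by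
    intro x y
    simp [inner_sub_left, inner_sub_right, inner_smul_left, inner_smul_right, hself]
  rw [ContinuousLinearMap.norm_eq_iSup_rayleighQuotient _ hs]
  apply ciSup_le
  intro x
  rw [ContinuousLinearMap.rayleighQuotient, ContinuousLinearMap.reApplyInnerSelf_apply]
  have h0 : RCLike.re ⟪(ContinuousLinearMap.id ℝ E - η • H) x, x⟫ =
      ‖x‖ ^ 2 - η * ⟪H x, x⟫ := by
    simp [inner_sub_left, inner_smul_left]
  rw [h0]
  rcases eq_or_ne x 0 with rfl | hx
  · simp
  have hx2 : 0 < ‖x‖ ^ 2 := by positivity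
  obtain ⟨h1, h2⟩ := hb x
  have h1' := mul_le_mul_of_nonneg_left h1 hη.le
  have h2' := mul_le_mul_of_nonneg_left h2 hη.le
  rw [abs_div, abs_of_pos hx2, div_le_iff₀ hx2]
  have hA : (1 - η * lam) ≤ max |1 - η * lam| |1 - η * Lam| :=
    (le_abs_self _).trans (le_max_left _ _)
  have hB : -(1 - η * Lam) ≤ max |1 - η * lam| |1 - η * Lam| :=
    (neg_le_abs _).trans (le_max_right _ _)
  have hA' := mul_le_mul_of_nonneg_right hA hx2.le
  have hB' := mul_le_mul_of_nonneg_right hB hx2.le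
  rw [abs_le]
  constructor <;> linarith

theorem norm_list_prod_apply_le {E : Type*} [NormedAddCommGroup E] [NormedSpace ℝ E]
    (α : ℝ) (hα : 0 ≤ α) (l : List (E →L[ℝ] E)) (hl : ∀ A ∈ l, ‖A‖ ≤ α) (v : E) :
    ‖l.prod v‖ ≤ α ^ l.length * ‖v‖ := by
  induction l with
  | nil => simp
  | cons A l ih =>
    have h := ih fun B hB => hl B (List.mem_cons_of_mem _ hB)
    have hA := hl A List.mem_cons_self
    rw [List.prod_cons, List.length_cons, ContinuousLinearMap.mul_apply]
    calc ‖A (l.prod v)‖ ≤ ‖A‖ * ‖l.prod v‖ := A.le_opNorm _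
      _ ≤ α * (α ^ l.length * ‖v‖) := by gcongr
      _ = _ := by ring

/-- Theorem 1 of the paper: error bound of the basic Fed-Influence estimator.
With `M_t = Σ_{k∈K_t} a_{t,k} • (I - ηH_{t,k,m-1}) ∘ ⋯ ∘ (I - ηH_{t,k,0})`, where each
self-adjoint local Hessian satisfies `λI ≼ H ≼ ΛI`, the exact influence `ε*` satisfying
`‖ε*_t - M_t ε*_{t-1} - b_t‖ ≤ e` and the estimator `ε_t = M_t ε_{t-1} + b_t` with
`ε*_0 = ε_0 = 0` differ by at most `e · Σ_{i=0}^{t-1} γ^i`, `γ = α^m`,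
`α = max |1-ηλ| |1-ηΛ|`. -/
theorem stmt_0 (p m T : ℕ) (hp : 1 ≤ p) (hm : 1 ≤ m)
    (η lam Lam : ℝ) (hη : 0 < η) (hlamLam : lam ≤ Lam)
    (α γ : ℝ) (hα : α = max |1 - η * lam| |1 - η * Lam|) (hγ : γ = α ^ m)
    {κ : Type*} (K : ℕ → Finset κ)
    (hKne : ∀ t, 1 ≤ t → t ≤ T → (K t).Nonempty)
    (a : ℕ → κ → ℝ)
    (ha : ∀ t, 1 ≤ t → t ≤ T → ∀ k ∈ K t, 0 ≤ a t k)
    (hsum : ∀ t, 1 ≤ t → t ≤ T → ∑ k ∈ K t, a t k = 1)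
    (H : ℕ → κ → ℕ → (EuclideanSpace ℝ (Fin p) →L[ℝ] EuclideanSpace ℝ (Fin p)))
    (hself : ∀ t, 1 ≤ t → t ≤ T → ∀ k ∈ K t, ∀ i, i < m →
      ∀ u v : EuclideanSpace ℝ (Fin p), ⟪H t k i v, u⟫ = ⟪v, H t k i u⟫)
    (hbound : ∀ t, 1 ≤ t → t ≤ T → ∀ k ∈ K t, ∀ i, i < m →
      ∀ v : EuclideanSpace ℝ (Fin p),
        lam * ‖v‖ ^ 2 ≤ ⟪H t k i v, v⟫ ∧ ⟪H t k i v, v⟫ ≤ Lam * ‖v‖ ^ 2)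
    (M : ℕ → (EuclideanSpace ℝ (Fin p) →L[ℝ] EuclideanSpace ℝ (Fin p)))
    (hM : ∀ t, 1 ≤ t → t ≤ T →
      M t = ∑ k ∈ K t, a t k • ((((List.range m).map fun i =>
        ContinuousLinearMap.id ℝ (EuclideanSpace ℝ (Fin p)) - η • H t k i)).reverse).prod)
    (b : ℕ → EuclideanSpace ℝ (Fin p))
    (εstar ε : ℕ → EuclideanSpace ℝ (Fin p))
    (hstar0 : εstar 0 = 0) (hε0 : ε 0 = 0)
    (hε : ∀ t, 1 ≤ t → t ≤ T → ε t = M t (ε (t - 1)) + b t)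
    (e : ℝ) (he : 0 ≤ e)
    (hrem : ∀ t, 1 ≤ t → t ≤ T → ‖εstar t - M t (εstar (t - 1)) - b t‖ ≤ e) :
    ∀ t, t ≤ T → ‖εstar t - ε t‖ ≤ e * ∑ i ∈ Finset.range t, γ ^ i := by
  have hα0 : 0 ≤ α := by rw [hα]; positivity
  have hγ0 : 0 ≤ γ := by rw [hγ]; positivity
  have hMn : ∀ t, 1 ≤ t → t ≤ T → ∀ v, ‖M t v‖ ≤ γ * ‖v‖ := by
    intro t h1 hT v
    rw [hM t h1 hT, ContinuousLinearMap.sum_apply]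
    calc _ ≤ ∑ k ∈ K t, a t k * (γ * ‖v‖) := by
          apply norm_sum_le_of_le
          intro k hk
          rw [ContinuousLinearMap.smul_apply, norm_smul, Real.norm_of_nonneg (ha t h1 hT k hk)]
          apply mul_le_mul_of_nonneg_left _ (ha t h1 hT k hk)
          refine (norm_list_prod_apply_le α hα0 _ ?_ v).trans (le_of_eq ?_)
          · intro A hA
            simp only [List.mem_reverse, List.mem_map, List.mem_range] at hA
            obtain ⟨i, hi, rfl⟩ := hA
            rw [hα]
            exact norm_factor_le η lam Lam hη _ (hself t h1 hT k hk i hi)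
              (hbound t h1 hT k hk i hi)
          · simp [hγ]
      _ = γ * ‖v‖ := by rw [← Finset.sum_mul, hsum t h1 hT, one_mul]
  intro t
  induction t with
  | zero => intro _; simp [hstar0, hε0]
  | succ t ih =>
    intro hT
    have ih := ih (by omega)
    have hr := hrem (t + 1) (by omega) hT
    have hn := hMn (t + 1) (by omega) hT (εstar t - ε t)
    have hee := hε (t + 1) (by omega) hT
    rw [Nat.add_sub_cancel] at hr hee
    have key : εstar (t + 1) - ε (t + 1) =
        (εstar (t + 1) - M (t + 1) (εstar t) - b (t + 1)) + M (t + 1) (εstar t - ε t) := by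
      rw [hee, map_sub]; abel
    rw [key, geom_sum_succ]
    refine (norm_add_le _ _).trans ?_
    have := mul_le_mul_of_nonneg_left ih hγ0
    linarith
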